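/- Every left 𝕆-module M has a basis S contained in 𝒜(M) ∪ 𝒜⁻(M): there exists a subset S ⊆ 𝒜(M) ∪ 𝒜⁻(M) that is 𝕆-linearly independent and satisfies 𝕆S = M, i.e., every element of M is a finite 𝕆-linear combination of elements of S. -/

import Mathlib

noncomputable section

open scoped Quaternion

/-- The octonions, realized as pairs of quaternions via the Cayley–Dickson construction. -/
def Octo : Type := ℍ[ℝ] × ℍ[ℝ]

namespace Octo

instance : AddCommGroup Octo := inferInstanceAs (AddCommGroup (ℍ[ℝ] × ℍ[ℝ]))
instance : Module ℝ Octo := inferInstanceAs (Module ℝ (ℍ[ℝ] × ℍ[ℝ]))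

/-- Build an octonion from a pair of quaternions. -/
def mk (a b : ℍ[ℝ]) : Octo := (a, b)

/-- First quaternion component. -/
def p1 (x : Octo) : ℍ[ℝ] := (show ℍ[ℝ] × ℍ[ℝ] from x).1

/-- Second quaternion component. -/
def p2 (x : Octo) : ℍ[ℝ] := (show ℍ[ℝ] × ℍ[ℝ] from x).2

/-- Cayley–Dickson multiplication: `(a,b)(c,d) = (ac − d̄b, da + bc̄)`. -/
instance : Mul Octo :=
  ⟨fun x y => mk (p1 x * p1 y - star (p2 y) * p2 x) (p2 y * p1 x + p2 x * star (p1 y))⟩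

instance : One Octo := ⟨mk 1 0⟩

/-- Octonion conjugation: for `x = (a,b)`, `x̄ = (ā, −b)`. -/
def conj (x : Octo) : Octo := mk (star (p1 x)) (-(p2 x))

/-- The octonion associator `[x,y,z] = (xy)z − x(yz)`. -/
def assoc (x y z : Octo) : Octo := x * y * z - x * (y * z)

/-- The octonion commutator `[x,y] = xy − yx`. -/
def comm (x y : Octo) : Octo := x * y - y * x

/-- The canonical embedding of the reals into the octonions. -/
def ofReal (r : ℝ) : Octo := r • (1 : Octo)

end Octo

section OMod

variable {M : Type*} [AddCommGroup M] [Module ℝ M]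
variable {N : Type*} [AddCommGroup N] [Module ℝ N]

/-- `IsOMod sm` says that the scalar multiplication `sm : 𝕆 × M → M` makes the real vector
space `M` a left 𝕆-module: `sm` is ℝ-bilinear, unital, and the left associator is
alternating in its two octonion arguments. -/
structure IsOMod (sm : Octo → M → M) : Prop where
  smul_add : ∀ (p : Octo) (m n : M), sm p (m + n) = sm p m + sm p n
  add_smul : ∀ (p q : Octo) (m : M), sm (p + q) m = sm p m + sm q m
  real_smul : ∀ (r : ℝ) (p : Octo) (m : M), sm (r • p) m = r • sm p m
  smul_real : ∀ (r : ℝ) (p : Octo) (m : M), sm p (r • m) = r • sm p m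
  one_smul : ∀ m : M, sm 1 m = m
  alt : ∀ (p q : Octo) (m : M),
    sm (p * q) m - sm p (sm q m) = -(sm (q * p) m - sm q (sm p m))

/-- The left associator `[p,q,m] = (pq)m − p(qm)`. -/
def oLassoc (sm : Octo → M → M) (p q : Octo) (m : M) : M :=
  sm (p * q) m - sm p (sm q m)

/-- The set `𝒜(M)` of associative elements: `[p,q,m] = 0` for all `p,q ∈ 𝕆`. -/
def assocSet (sm : Octo → M → M) : Set M :=
  {m | ∀ p q : Octo, oLassoc sm p q m = 0}

/-- The set `𝒜⁻(M)` of conjugate associative elements: `(pq)m = q(pm)` for all `p,q ∈ 𝕆`. -/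
def conjAssocSet (sm : Octo → M → M) : Set M :=
  {m | ∀ p q : Octo, sm (p * q) m = sm q (sm p m)}

/-- A homomorphism of left 𝕆-modules: an ℝ-linear map commuting with 𝕆-scalar
multiplication. -/
def IsOHom (sm : Octo → M → M) (sm' : Octo → N → N) (f : M → N) : Prop :=
  IsLinearMap ℝ f ∧ ∀ (p : Octo) (m : M), f (sm p m) = sm' p (f m)

/-- Two left 𝕆-modules are isomorphic if there is a bijective homomorphism between them. -/
def OIso (sm : Octo → M → M) (sm' : Octo → N → N) : Prop :=
  ∃ f : M → N, IsOHom sm sm' f ∧ Function.Bijective f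

/-- A submodule: a real subspace closed under 𝕆-scalar multiplication. -/
structure IsOSubmodule (sm : Octo → M → M) (S : Set M) : Prop where
  zero_mem : (0 : M) ∈ S
  add_mem : ∀ {x y : M}, x ∈ S → y ∈ S → x + y ∈ S
  smul_mem : ∀ (r : ℝ) {x : M}, x ∈ S → r • x ∈ S
  osmul_mem : ∀ (p : Octo) {x : M}, x ∈ S → sm p x ∈ S

/-- `⟨m⟩_𝕆`, the smallest submodule containing `m`, as a set. -/
def genSet (sm : Octo → M → M) (m : M) : Set M :=
  ⋂₀ {S : Set M | IsOSubmodule sm S ∧ m ∈ S}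

/-- An element `m` is cyclic if `⟨m⟩_𝕆 = 𝕆m`. -/
def IsOCyclic (sm : Octo → M → M) (m : M) : Prop :=
  genSet sm m = {x | ∃ p : Octo, x = sm p m}

/-- 𝕆-linear independence of a subset `S ⊆ M`: any finite 𝕆-linear combination of
distinct elements of `S` that vanishes has all coefficients zero. -/
def OLinIndep (sm : Octo → M → M) (S : Set M) : Prop :=
  ∀ (n : ℕ) (s : Fin n → M) (r : Fin n → Octo), Function.Injective s → (∀ i, s i ∈ S) →
    (∑ i, sm (r i) (s i)) = 0 → ∀ i, r i = 0

end OMod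

/-- The canonical left 𝕆-module structure on 𝕆 itself. -/
def oSmul : Octo → Octo → Octo := fun p x => p * x

/-- The left 𝕆-module structure `𝕆̄` on 𝕆: `p ·̂ x = p̄x`. -/
def oBarSmul : Octo → Octo → Octo := fun p x => Octo.conj p * x

/-- Octonions from real coordinates, ordered `1, i, j, l, k, il, jl, kl`. -/
def Octo.of (p : Fin 8 → ℝ) : Octo :=
  Octo.mk ⟨p 0, p 1, p 2, p 4⟩ ⟨p 3, p 5, p 6, p 7⟩

/-- Coordinates, in the same order. -/
def Octo.co (x : Octo) : Fin 8 → ℝ :=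
  ![(p1 x).re, (p1 x).imI, (p1 x).imJ, (p2 x).re, (p1 x).imK, (p2 x).imI, (p2 x).imJ, (p2 x).imK]

namespace Octo

theorem ext' {x y : Octo} (h1 : p1 x = p1 y) (h2 : p2 x = p2 y) : x = y := Prod.ext h1 h2

theorem of_co (x : Octo) : of (co x) = x := by
  apply ext' <;> ext <;> simp [of, co, mk, p1, p2]

theorem p1_mul (x y : Octo) : p1 (x * y) = p1 x * p1 y - star (p2 y) * p2 x := rfl
theorem p2_mul (x y : Octo) : p2 (x * y) = p2 y * p1 x + p2 x * star (p1 y) := rfl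
theorem p1_add (x y : Octo) : p1 (x + y) = p1 x + p1 y := rfl
theorem p2_add (x y : Octo) : p2 (x + y) = p2 x + p2 y := rfl
theorem p1_smul (r : ℝ) (y : Octo) : p1 (r • y) = r • p1 y := rfl
theorem p2_smul (r : ℝ) (y : Octo) : p2 (r • y) = r • p2 y := rfl
theorem p1_one : p1 (1 : Octo) = 1 := rfl
theorem p2_one : p2 (1 : Octo) = 0 := rfl
theorem p1_zero : p1 (0 : Octo) = 0 := rfl
theorem p2_zero : p2 (0 : Octo) = 0 := rfl
@[simp] theorem of_re1 (p : Fin 8 → ℝ) : (p1 (of p)).re = p 0 := rfl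
@[simp] theorem of_i1 (p : Fin 8 → ℝ) : (p1 (of p)).imI = p 1 := rfl
@[simp] theorem of_j1 (p : Fin 8 → ℝ) : (p1 (of p)).imJ = p 2 := rfl
@[simp] theorem of_k1 (p : Fin 8 → ℝ) : (p1 (of p)).imK = p 4 := rfl
@[simp] theorem of_re2 (p : Fin 8 → ℝ) : (p2 (of p)).re = p 3 := rfl
@[simp] theorem of_i2 (p : Fin 8 → ℝ) : (p2 (of p)).imI = p 5 := rfl
@[simp] theorem of_j2 (p : Fin 8 → ℝ) : (p2 (of p)).imJ = p 6 := rfl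
@[simp] theorem of_k2 (p : Fin 8 → ℝ) : (p2 (of p)).imK = p 7 := rfl

/-- The standard basis. -/
def e (i : Fin 8) : Octo := of (Pi.single i 1)

theorem e_zero : e 0 = 1 := by
  apply ext' <;> ext <;> simp [e, p1_one, p2_one]

theorem decomp (x : Octo) : x = ∑ i, co x i • e i := by
  apply ext' <;> ext <;>
    simp [Fin.sum_univ_eight, e, p1_add, p2_add, p1_smul, p2_smul, co]

theorem co_mul (x y : Octo) : co (x * y) =
  let a := co x
  let b := co y
  ![a 0 * b 0 - a 1 * b 1 - a 2 * b 2 - a 4 * b 4 - a 3 * b 3 - a 5 * b 5 - a 6 * b 6 - a 7 * b 7,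
    a 0 * b 1 + a 1 * b 0 + a 2 * b 4 - a 4 * b 2 + a 3 * b 5 - a 5 * b 3 - a 6 * b 7 + a 7 * b 6,
    a 0 * b 2 + a 2 * b 0 + a 4 * b 1 - a 1 * b 4 + a 3 * b 6 - a 6 * b 3 - a 7 * b 5 + a 5 * b 7,
    a 0 * b 3 + a 3 * b 0 - a 1 * b 5 + a 5 * b 1 - a 2 * b 6 + a 6 * b 2 - a 4 * b 7 + a 7 * b 4,
    a 0 * b 4 + a 4 * b 0 + a 1 * b 2 - a 2 * b 1 + a 3 * b 7 - a 7 * b 3 - a 5 * b 6 + a 6 * b 5,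
    a 0 * b 5 + a 5 * b 0 + a 1 * b 3 - a 3 * b 1 - a 2 * b 7 + a 7 * b 2 + a 4 * b 6 - a 6 * b 4,
    a 0 * b 6 + a 6 * b 0 + a 2 * b 3 - a 3 * b 2 + a 1 * b 7 - a 7 * b 1 - a 4 * b 5 + a 5 * b 4,
    a 0 * b 7 + a 7 * b 0 + a 4 * b 3 - a 3 * b 4 - a 1 * b 6 + a 6 * b 1 + a 2 * b 5 - a 5 * b 2] := by
  funext i
  fin_cases i <;> simp [co, p1_mul, p2_mul] <;> ring

theorem co_e (i : Fin 8) : co (e i) = Pi.single i 1 := by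
  funext k; fin_cases k <;> simp [co, e]

theorem e_sq (i : Fin 8) (hi : i ≠ 0) : e i * e i = (-1 : ℝ) • (1 : Octo) := by
  have : co (e i * e i) = co ((-1 : ℝ) • (1 : Octo)) := by
    have h1 : co ((-1 : ℝ) • (1 : Octo)) = ![-1, 0, 0, 0, 0, 0, 0, 0] := by
      funext k
      fin_cases k <;> simp [co, p1_smul, p2_smul, p1_one, p2_one, -neg_smul]
    rw [h1, co_mul, co_e]
    fin_cases i <;> first | exact absurd rfl hi | skip
    all_goals funext k; fin_cases k <;> simp [Pi.single_apply]
  rw [← of_co (e i * e i), this, of_co]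

theorem e_anti (i j : Fin 8) (hi : i ≠ 0) (hj : i < j) : e i * e j + e j * e i = 0 := by
  have h : ∀ k, co (e i * e j + e j * e i) k = co (e i * e j) k + co (e j * e i) k := by
    intro k; fin_cases k <;> simp [co, p1_add, p2_add]
  have h0 : j ≠ 0 := by rintro rfl; simp at hj
  have hprod : ∀ k, (Pi.single i 1 : Fin 8 → ℝ) k * (Pi.single j 1 : Fin 8 → ℝ) k = 0 := by
    intro k
    by_cases hk : k = i
    · subst hk; simp [Pi.single_apply, hj.ne]
    · simp [Pi.single_apply, hk]
  have hi0 : (Pi.single i 1 : Fin 8 → ℝ) 0 = 0 := by simp [Pi.single_apply, hi.symm]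
  have hj0 : (Pi.single j 1 : Fin 8 → ℝ) 0 = 0 := by simp [Pi.single_apply, h0.symm]
  have : ∀ k, co (e i * e j + e j * e i) k = 0 := by
    intro k
    rw [h, co_mul, co_mul, co_e, co_e]
    generalize (Pi.single i 1 : Fin 8 → ℝ) = a at *
    generalize (Pi.single j 1 : Fin 8 → ℝ) = b at *
    fin_cases k
    · simp only [Fin.isValue, Fin.zero_eta, Matrix.cons_val_zero]
      linear_combination (2:ℝ) * hprod 0 - 2 * hprod 1 - 2 * hprod 2 - 2 * hprod 3 - 2 * hprod 4 - 2 * hprod 5 - 2 * hprod 6 - 2 * hprod 7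
    all_goals simp [hi0, hj0]; try ring
  rw [decomp (e i * e j + e j * e i)]
  simp [this]

end Octo

section Rep

variable {M : Type*} [AddCommGroup M] [Module ℝ M]

/-- Anticommuting complex structures `J 1, …, J 7`. -/
structure Cl7 (J : Fin 8 → Module.End ℝ M) : Prop where
  sq : ∀ i, i ≠ 0 → ∀ x, J i (J i x) = -x
  anti : ∀ i j, i ≠ 0 → i < j → ∀ x, J j (J i x) = -J i (J j x)
  zero : ∀ x, J 0 x = x

/-- the joint eigenspaces -/
def Eig (J : Fin 8 → Module.End ℝ M) (ε : ℝ) (a : M) : Prop :=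
  J 4 a = ε • J 1 (J 2 a) ∧ J 5 a = ε • J 1 (J 3 a) ∧ J 6 a = ε • J 2 (J 3 a) ∧
    J 7 a = - J 1 (J 2 (J 3 a))

def S4 (J : Fin 8 → Module.End ℝ M) : Module.End ℝ M := -(J 1 * J 2 * J 4)
def S5 (J : Fin 8 → Module.End ℝ M) : Module.End ℝ M := -(J 1 * J 3 * J 5)
def S6 (J : Fin 8 → Module.End ℝ M) : Module.End ℝ M := -(J 2 * J 3 * J 6)
def S7 (J : Fin 8 → Module.End ℝ M) : Module.End ℝ M := -(J 1 * J 2 * J 3 * J 7)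

def Q (S : Module.End ℝ M) (ε : ℝ) : Module.End ℝ M := (1/2 : ℝ) • (1 + ε • S)

def PP (J : Fin 8 → Module.End ℝ M) (ε : ℝ) : Module.End ℝ M :=
  Q (S4 J) ε * Q (S5 J) ε * Q (S6 J) ε * Q (S7 J) 1

theorem Q_apply (S : Module.End ℝ M) (ε : ℝ) (x : M) : Q S ε x = (1/2 : ℝ) • (x + ε • S x) := by
  simp [Q]

theorem Q_move (S X : Module.End ℝ M) (ε δ : ℝ) (h : S * X = δ • (X * S)) :
    Q S ε * X = X * Q S (δ * ε) := by
  simp only [Q, smul_mul_assoc, mul_smul_comm, add_mul, mul_add, h, one_mul, mul_one, smul_smul,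
    mul_comm]

theorem Q_eig (S : Module.End ℝ M) (hS : S * S = 1) (ε : ℝ) (hε : ε * ε = 1) :
    S * Q S ε = ε • Q S ε := by
  simp only [Q, mul_smul_comm, mul_add, hS, smul_add, smul_smul, mul_one]
  rw [show ε * (1/2 * ε) = 1/2 by linear_combination (1/2) * hε, mul_comm ε]
  abel

variable {J : Fin 8 → Module.End ℝ M}

theorem Cl7.S_sq (h : Cl7 J) : S4 J * S4 J = 1 ∧ S5 J * S5 J = 1 ∧ S6 J * S6 J = 1 ∧
    S7 J * S7 J = 1 := by
  refine ⟨?_, ?_, ?_, ?_⟩ <;> ext x <;> simp [S4, S5, S6, S7, h.sq, h.anti]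

theorem Cl7.S_comm (h : Cl7 J) : S4 J * S5 J = S5 J * S4 J ∧ S4 J * S6 J = S6 J * S4 J ∧
    S4 J * S7 J = S7 J * S4 J ∧ S5 J * S6 J = S6 J * S5 J ∧ S5 J * S7 J = S7 J * S5 J ∧
    S6 J * S7 J = S7 J * S6 J := by
  refine ⟨?_, ?_, ?_, ?_, ?_, ?_⟩ <;> ext x <;> simp [S4, S5, S6, S7, h.sq, h.anti]

/-- commutation of the `S`'s with a generator -/
theorem Cl7.S_J (h : Cl7 J) (i : Fin 8) (hi : i ≠ 0) :
    S4 J * J i = (![1, 1, 1, -1, 1, -1, -1, -1] i : ℝ) • (J i * S4 J) ∧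
    S5 J * J i = (![1, 1, -1, 1, -1, 1, -1, -1] i : ℝ) • (J i * S5 J) ∧
    S6 J * J i = (![1, -1, 1, 1, -1, -1, 1, -1] i : ℝ) • (J i * S6 J) ∧
    S7 J * J i = (![1, -1, -1, -1, 1, 1, 1, -1] i : ℝ) • (J i * S7 J) := by
  fin_cases i <;> first | exact absurd rfl hi | skip
  all_goals refine ⟨?_, ?_, ?_, ?_⟩ <;> ext x <;> simp [S4, S5, S6, S7, h.sq, h.anti]

theorem Cl7.PP_conj (h : Cl7 J) (ε : ℝ) (i : Fin 8) (hi : i ≠ 0) :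
    J i * PP J ε * -J i =
      Q (S4 J) (![1, 1, 1, -1, 1, -1, -1, -1] i * ε) * Q (S5 J) (![1, 1, -1, 1, -1, 1, -1, -1] i * ε) *
      Q (S6 J) (![1, -1, 1, 1, -1, -1, 1, -1] i * ε) * Q (S7 J) (![1, -1, -1, -1, 1, 1, 1, -1] i) := by
  obtain ⟨h4, h5, h6, h7⟩ := h.S_J i hi
  have hsq : J i * J i = -1 := by ext x; simp [h.sq i hi]
  have key : PP J ε * J i = J i * (Q (S4 J) (![1, 1, 1, -1, 1, -1, -1, -1] i * ε) * Q (S5 J) (![1, 1, -1, 1, -1, 1, -1, -1] i * ε) *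
      Q (S6 J) (![1, -1, 1, 1, -1, -1, 1, -1] i * ε) * Q (S7 J) (![1, -1, -1, -1, 1, 1, 1, -1] i)) := by
    rw [PP, mul_assoc, Q_move _ _ 1 _ h7, mul_one, ← mul_assoc, mul_assoc _ _ (J i),
      Q_move _ _ ε _ h6, ← mul_assoc, mul_assoc _ _ (J i),
      Q_move _ _ ε _ h5, ← mul_assoc, Q_move _ _ ε _ h4]
    simp only [mul_assoc]
  rw [mul_neg, mul_assoc, key, ← mul_assoc, hsq]
  simp

theorem Q_neg (S : Module.End ℝ M) : Q S (-1) = 1 - Q S 1 := by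
  ext x
  simp only [Q_apply, LinearMap.sub_apply, Module.End.one_apply]
  module

theorem Cl7.resolution (h : Cl7 J) :
    (PP J 1 + ∑ i : Fin 7, J i.succ * PP J 1 * -J i.succ) +
    (PP J (-1) + ∑ i : Fin 7, J i.succ * PP J (-1) * -J i.succ) = 1 := by
  simp only [fun ε (i : Fin 7) => h.PP_conj ε i.succ (Fin.succ_ne_zero i), Fin.sum_univ_seven]
  simp [PP, Q_neg]
  noncomm_ring

theorem Cl7.PP_mem (h : Cl7 J) (ε : ℝ) (hε : ε * ε = 1) (x : M) : Eig J ε (PP J ε x) := by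
  obtain ⟨q4, q5, q6, q7⟩ := h.S_sq
  obtain ⟨c45, c46, c47, c56, c57, c67⟩ := h.S_comm
  have mv : ∀ S X : Module.End ℝ M, ∀ δ, X * S = S * X → X * Q S δ = Q S δ * X := by
    intro S X δ hc
    rw [Q_move S X δ 1 (by rw [one_smul, hc]), one_mul]
  have e4 : S4 J * PP J ε = ε • PP J ε := by
    rw [PP, ← mul_assoc, ← mul_assoc, ← mul_assoc, Q_eig _ q4 _ hε]; simp
  have e5 : S5 J * PP J ε = ε • PP J ε := by
    rw [PP, ← mul_assoc, ← mul_assoc, ← mul_assoc, mv _ _ _ c45.symm, mul_assoc (Q (S4 J) ε),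
      Q_eig _ q5 _ hε]; simp
  have e6 : S6 J * PP J ε = ε • PP J ε := by
    rw [PP, ← mul_assoc, ← mul_assoc, ← mul_assoc, mv _ _ _ c46.symm, mul_assoc (Q (S4 J) ε),
      mv _ _ _ c56.symm, ← mul_assoc, mul_assoc _ (S6 J), Q_eig _ q6 _ hε]; simp
  have e7 : S7 J * PP J ε = PP J ε := by
    rw [PP, ← mul_assoc, ← mul_assoc, ← mul_assoc, mv _ _ _ c47.symm, mul_assoc (Q (S4 J) ε),
      mv _ _ _ c57.symm, ← mul_assoc, mul_assoc _ (S7 J), mv _ _ _ c67.symm, ← mul_assoc,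
      mul_assoc _ (S7 J), Q_eig _ q7 _ (one_mul 1)]; simp
  generalize PP J ε = P at *
  replace e4 := congrArg (fun f => J 1 (J 2 (f x))) e4
  replace e5 := congrArg (fun f => J 1 (J 3 (f x))) e5
  replace e6 := congrArg (fun f => J 2 (J 3 (f x))) e6
  replace e7 := congrArg (fun f => J 1 (J 2 (J 3 (f x)))) e7
  simp [S4, S5, S6, S7, h.sq, h.anti] at e4 e5 e6 e7
  exact ⟨e4, e5, e6, by rw [← e7]; simp⟩

theorem Cl7.PP_apply (h : Cl7 J) (ε δ : ℝ) (hε : ε = 1 ∨ ε = -1) (hδ : δ = 1 ∨ δ = -1) (a : M)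
    (ha : Eig J δ a) (i : Fin 8) :
    PP J ε (J i a) = if i = 0 ∧ ε = δ then a else 0 := by
  obtain ⟨h4, h5, h6, h7⟩ := ha
  have s4 : S4 J a = δ • a := by simp [S4, h4, h.sq, h.anti]
  have s5 : S5 J a = δ • a := by simp [S5, h5, h.sq, h.anti]
  have s6 : S6 J a = δ • a := by simp [S6, h6, h.sq, h.anti]
  have s7 : S7 J a = a := by simp [S7, h7, h.sq, h.anti]
  have hq : ∀ (S : Module.End ℝ M) (c : ℝ) (γ : ℝ), S (J i a) = γ • (J i a) →
    Q S c (J i a) = ((1 + c * γ) / 2) • J i a := by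
    intro S c γ hS
    rw [Q_apply, hS]; module
  have key : ∀ c4 c5 c6 c7 : ℝ, S4 J (J i a) = c4 • (J i a) → S5 J (J i a) = c5 • (J i a) →
     S6 J (J i a) = c6 • (J i a) → S7 J (J i a) = c7 • (J i a) → PP J ε (J i a) =
      (((1 + ε * c4) / 2) * ((1 + ε * c5) / 2) * ((1 + ε * c6) / 2) * ((1 + c7) / 2)) • J i a := by
    intro c4 c5 c6 c7 k4 k5 k6 k7
    simp only [PP, Module.End.mul_apply, hq _ _ _ k4, hq _ _ _ k5, hq _ _ _ k6, hq _ _ _ k7,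
      map_smul, smul_smul, one_mul]
    congr 1; ring
  by_cases hi : i = 0
  · subst hi
    rw [key δ δ δ 1 (by simp [h.zero, s4]) (by simp [h.zero, s5]) (by simp [h.zero, s6])
      (by simp [h.zero, s7])]
    rw [h.zero]
    rcases hε with rfl | rfl <;> rcases hδ with rfl | rfl <;> norm_num
  · obtain ⟨k4, k5, k6, k7⟩ := h.S_J i hi
    replace k4 := LinearMap.congr_fun k4 a
    replace k5 := LinearMap.congr_fun k5 a
    replace k6 := LinearMap.congr_fun k6 a
    replace k7 := LinearMap.congr_fun k7 a
    simp only [Module.End.mul_apply, LinearMap.smul_apply, s4, s5, s6, s7, map_smul, smul_smul]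
      at k4 k5 k6 k7
    rw [key _ _ _ _ k4 k5 k6 k7, if_neg (fun hh => hi hh.1)]
    convert zero_smul ℝ (J i a)
    fin_cases i <;> first | exact absurd rfl hi | skip
    all_goals
      rcases hε with rfl | rfl <;> rcases hδ with rfl | rfl <;> simp

end Rep

section Main

variable {M : Type*} [AddCommGroup M] [Module ℝ M] {sm : Octo → M → M}

/-- the operators of left multiplication by the basis octonions -/
def IsOMod.J (h : IsOMod sm) (i : Fin 8) : Module.End ℝ M where
  toFun := sm (Octo.e i)
  map_add' := h.smul_add _
  map_smul' r m := h.smul_real r _ m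

theorem IsOMod.sm_zero (h : IsOMod sm) (m : M) : sm 0 m = 0 := by
  have := h.real_smul 0 0 m
  simpa using this

theorem IsOMod.sm_eq (h : IsOMod sm) (p : Octo) (m : M) :
    sm p m = ∑ i, Octo.co p i • h.J i m := by
  conv_lhs => rw [Octo.decomp p]
  simp only [Fin.sum_univ_eight, h.add_smul, h.real_smul]
  rfl

theorem IsOMod.cl (h : IsOMod sm) : Cl7 h.J where
  sq i hi x := by
    have h1 := h.alt (Octo.e i) (Octo.e i) x
    rw [Octo.e_sq i hi, h.real_smul, h.one_smul] at h1
    change sm _ (sm _ x) = _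
    rw [eq_neg_iff_add_eq_zero, ← two_smul ℝ] at h1
    have := (smul_eq_zero.1 h1).resolve_left two_ne_zero
    rw [← sub_eq_zero.1 this]; simp
  anti i j hi hj x := by
    have h1 := h.alt (Octo.e i) (Octo.e j) x
    have h2 := h.add_smul (Octo.e i * Octo.e j) (Octo.e j * Octo.e i) x
    rw [Octo.e_anti i j hi hj, h.sm_zero] at h2
    change sm _ (sm _ x) = - sm _ (sm _ x)
    rw [eq_neg_iff_add_eq_zero]
    rw [eq_neg_iff_add_eq_zero] at h1
    have h3 : sm (Octo.e j) (sm (Octo.e i) x) + sm (Octo.e i) (sm (Octo.e j) x) =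
      (sm (Octo.e i * Octo.e j) x + sm (Octo.e j * Octo.e i) x) -
      (sm (Octo.e i * Octo.e j) x - sm (Octo.e i) (sm (Octo.e j) x) +
        (sm (Octo.e j * Octo.e i) x - sm (Octo.e j) (sm (Octo.e i) x))) := by abel
    rw [h3, h1, ← h2, sub_zero]
  zero x := by
    change sm _ x = x
    rw [Octo.e_zero, h.one_smul]

set_option maxHeartbeats 4000000 in
theorem IsOMod.assoc_of_eig (h : IsOMod sm) {a : M} (ha : Eig h.J 1 a) (p q : Octo) :
    sm (p * q) a = sm p (sm q a) := by
  have c := h.cl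
  obtain ⟨h4, h5, h6, h7⟩ := ha
  rw [_root_.one_smul] at h4 h5 h6
  simp only [h.sm_eq, Octo.co_mul]
  generalize Octo.co p = p
  generalize Octo.co q = q
  generalize h.J = J at *
  simp [Fin.sum_univ_eight, c.zero, c.sq, c.anti, h4, h5, h6, h7]
  module

set_option maxHeartbeats 4000000 in
theorem IsOMod.conj_of_eig (h : IsOMod sm) {a : M} (ha : Eig h.J (-1) a) (p q : Octo) :
    sm (p * q) a = sm q (sm p a) := by
  have c := h.cl
  obtain ⟨h4, h5, h6, h7⟩ := ha
  rw [neg_one_smul] at h4 h5 h6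
  simp only [h.sm_eq, Octo.co_mul]
  generalize Octo.co p = p
  generalize Octo.co q = q
  generalize h.J = J at *
  simp [Fin.sum_univ_eight, c.zero, c.sq, c.anti, h4, h5, h6, h7]
  module

theorem IsOMod.PP_sm (h : IsOMod sm) (ε δ : ℝ) (hε : ε = 1 ∨ ε = -1) (hδ : δ = 1 ∨ δ = -1) {a : M}
    (ha : Eig h.J δ a) (p : Octo) :
    PP h.J ε (sm p a) = if ε = δ then Octo.co p 0 • a else 0 := by
  rw [h.sm_eq, map_sum]
  simp only [map_smul, h.cl.PP_apply ε δ hε hδ a ha]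
  rw [Fin.sum_univ_succ]
  by_cases hh : ε = δ <;> simp [hh]

theorem IsOMod.J_sm (h : IsOMod sm) (δ : ℝ) (hδ : δ = 1 ∨ δ = -1) {a : M}
    (ha : Eig h.J δ a) (r : Octo) (i : Fin 8) :
    ∃ p, h.J i (sm r a) = sm p a ∧ Octo.co p 0 = (if i = 0 then 1 else -1) * Octo.co r i := by
  rcases hδ with rfl | rfl
  · refine ⟨Octo.e i * r, (h.assoc_of_eig ha _ _).symm, ?_⟩
    rw [Octo.co_mul, Octo.co_e]
    fin_cases i <;> simp
  · refine ⟨r * Octo.e i, (h.conj_of_eig ha _ _).symm, ?_⟩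
    rw [Octo.co_mul, Octo.co_e]
    fin_cases i <;> simp

theorem IsOMod.PPJ_sm (h : IsOMod sm) (ε δ : ℝ) (hε : ε = 1 ∨ ε = -1) (hδ : δ = 1 ∨ δ = -1) {a : M}
    (ha : Eig h.J δ a) (r : Octo) (i : Fin 8) :
    PP h.J ε (h.J i (sm r a)) =
      if ε = δ then ((if i = 0 then 1 else -1) * Octo.co r i) • a else 0 := by
  obtain ⟨p, hp, hp'⟩ := h.J_sm δ hδ ha r i
  rw [hp, h.PP_sm ε δ hε hδ ha, hp']

theorem IsOMod.indep_aux (h : IsOMod sm) (ε : ℝ) (hε : ε = 1 ∨ ε = -1) (B B' : Set M)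
    (hB : ∀ a ∈ B, Eig h.J ε a) (hB' : ∀ a ∈ B', Eig h.J (-ε) a)
    (hli : LinearIndependent ℝ (Subtype.val : B → M))
    (n : ℕ) (s : Fin n → M) (r : Fin n → Octo) (hs : Function.Injective s)
    (hm : ∀ i, s i ∈ B ∨ s i ∈ B') (h0 : ∑ i, sm (r i) (s i) = 0) (k : Fin n) (hk : s k ∈ B) :
    r k = 0 := by
  classical
  have hne : ε ≠ -ε := by rcases hε with rfl | rfl <;> norm_num
  have hε' : -ε = 1 ∨ -ε = -1 := by rcases hε with rfl | rfl <;> norm_num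
  have hco : ∀ i, Octo.co (r k) i = 0 := by
    intro i
    have h1 := congrArg (fun x => PP h.J ε (h.J i x)) h0
    simp only [map_sum, map_zero] at h1
    have h2 : ∀ j, PP h.J ε (h.J i (sm (r j) (s j))) =
        if s j ∈ B then ((if i = 0 then 1 else -1) * Octo.co (r j) i) • s j else 0 := by
      intro j
      by_cases hj : s j ∈ B
      · rw [h.PPJ_sm ε ε hε hε (hB _ hj), if_pos rfl, if_pos hj]
      · rw [h.PPJ_sm ε (-ε) hε hε' (hB' _ ((hm j).resolve_left hj)), if_neg hne, if_neg hj]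
    simp only [h2] at h1
    rw [← Finset.sum_filter, ← Finset.sum_subtype_eq_sum_filter] at h1
    have hli2 : LinearIndependent ℝ (fun j : {j // s j ∈ B} => s j) :=
      hli.comp (fun j : {j // s j ∈ B} => (⟨s j, j.2⟩ : B)) (by
        intro x y hxy
        exact Subtype.ext (hs (congrArg Subtype.val hxy)))
    have h3 := Fintype.linearIndependent_iff.1 hli2
      (fun j => (if i = 0 then 1 else -1) * Octo.co (r j) i) (by simpa using h1) ⟨k, hk⟩
    by_cases hi : i = 0 <;> simpa [hi] using h3
  rw [Octo.decomp (r k)]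
  simp [hco]

/-- The set of `𝕆`-linear combinations. -/
def OComb (sm : Octo → M → M) (S : Set M) (m : M) : Prop :=
  ∃ (n : ℕ) (s : Fin n → M) (r : Fin n → Octo), (∀ i, s i ∈ S) ∧ m = ∑ i, sm (r i) (s i)

theorem OComb.zero (S : Set M) : OComb sm S 0 :=
  ⟨0, Fin.elim0, Fin.elim0, fun i => i.elim0, by simp⟩

theorem OComb.add {S : Set M} {x y : M} (hx : OComb sm S x) (hy : OComb sm S y) :
    OComb sm S (x + y) := by
  obtain ⟨n, s, r, hs, rfl⟩ := hx
  obtain ⟨n', s', r', hs', rfl⟩ := hy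
  refine ⟨n + n', Fin.append s s', Fin.append r r', ?_, ?_⟩
  · intro i
    refine Fin.addCases (fun i => ?_) (fun i => ?_) i
    · simpa using hs i
    · simpa using hs' i
  · simp [Fin.sum_univ_add]

theorem OComb.sum {S : Set M} {ι : Type*} (t : Finset ι) (f : ι → M)
    (hf : ∀ i, OComb sm S (f i)) : OComb sm S (∑ i ∈ t, f i) :=
  Finset.sum_induction _ _ (fun _ _ => OComb.add) (OComb.zero S) (fun i _ => hf i)

theorem OComb.of_span (h : IsOMod sm) {S B : Set M} (hBS : B ⊆ S) {a : M}
    (ha : a ∈ Submodule.span ℝ B) : ∀ p, OComb sm S (sm p a) := by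
  induction ha using Submodule.span_induction with
  | mem x hx => exact fun p => ⟨1, fun _ => x, fun _ => p, fun _ => hBS hx, by simp⟩
  | zero =>
    intro p
    have : sm p 0 = 0 := by simpa using h.smul_real 0 p 0
    rw [this]; exact OComb.zero S
  | add x y _ _ hx hy => intro p; rw [h.smul_add]; exact (hx p).add (hy p)
  | smul r x _ hx => intro p; rw [h.smul_real, ← h.real_smul]; exact hx _

end Main

/-- Every left 𝕆-module has a basis contained in `𝒜(M) ∪ 𝒜⁻(M)`: an
𝕆-linearly independent subset `S` such that every element of `M` is a finite 𝕆-linear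
combination of elements of `S`. -/
theorem stmt15 {M : Type*} [AddCommGroup M] [Module ℝ M]
    (sm : Octo → M → M) (h : IsOMod sm) :
    ∃ S : Set M, S ⊆ assocSet sm ∪ conjAssocSet sm ∧ OLinIndep sm S ∧
      ∀ m : M, ∃ (n : ℕ) (s : Fin n → M) (r : Fin n → Octo),
        (∀ i, s i ∈ S) ∧ m = ∑ i, sm (r i) (s i) := by
  obtain ⟨B, hB, hBs, hBi⟩ := exists_linearIndependent ℝ {a : M | Eig h.J 1 a}
  obtain ⟨B', hB', hBs', hBi'⟩ := exists_linearIndependent ℝ {a : M | Eig h.J (-1) a}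
  refine ⟨B ∪ B', ?_, ?_, ?_⟩
  · rintro a (ha | ha)
    · exact Or.inl fun p q => sub_eq_zero.2 (h.assoc_of_eig (hB ha) p q)
    · exact Or.inr fun p q => h.conj_of_eig (hB' ha) p q
  · intro n s r hs hm h0 k
    rcases hm k with hk | hk
    · exact h.indep_aux 1 (Or.inl rfl) B B' (fun a ha => hB ha) (fun a ha => hB' ha) hBi n s r hs
        hm h0 k hk
    · exact h.indep_aux (-1) (Or.inr rfl) B' B (fun a ha => hB' ha)
        (fun a ha => by rw [neg_neg]; exact hB ha) hBi' n s r hs (fun i => (hm i).symm) h0 k hk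
  · intro m
    change OComb sm (B ∪ B') m
    have hp : ∀ x p, OComb sm (B ∪ B') (sm p (PP h.J 1 x)) := fun x p =>
      OComb.of_span h Set.subset_union_left
        (hBs ▸ Submodule.subset_span (h.cl.PP_mem 1 (by norm_num) x)) p
    have hn : ∀ x p, OComb sm (B ∪ B') (sm p (PP h.J (-1) x)) := fun x p =>
      OComb.of_span h Set.subset_union_right
        (hBs' ▸ Submodule.subset_span (h.cl.PP_mem (-1) (by norm_num) x)) p
    have hres := LinearMap.congr_fun h.cl.resolution m
    rw [Module.End.one_apply] at hres
    rw [← hres]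
    simp only [LinearMap.add_apply, LinearMap.sum_apply, Module.End.mul_apply]
    refine OComb.add (OComb.add ?_ (OComb.sum _ _ fun i => hp _ _))
      (OComb.add ?_ (OComb.sum _ _ fun i => hn _ _))
    · have := hp m 1
      rwa [h.one_smul] at this
    · have := hn m 1
      rwa [h.one_smul] at this
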